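/- Let 0 < γ < 1, let a < b, c < d, and let u be six times continuously differentiable on [a, b] × [c, d]. For positive integers M_x, M_y set h_x = (b − a)/M_x, h_y = (d − c)/M_y, x_{l/2} = a + l h_x/2 (l = 0, …, 2M_x), y_{r/2} = c + r h_y/2 (r = 0, …, 2M_y), and let u_Q be the piecewise Lagrange quadratic interpolant of u on this tensor grid. Then there is a constant C > 0, depending only on u, γ, a, b, c, d, such that for all M_x, M_y ≥ 1 and all indices 1 ≤ i ≤ 2M_x − 1, 1 ≤ j ≤ 2M_y − 1, |∫_c^d ∫_a^b (u(x, y) − u_Q(x, y)) · |x_{i/2} − x|^{−γ} |y_{j/2} − y|^{−γ} dx dy| ≤ C (h_x^4 (η_{i/2})^{−γ} + h_y^4 (η̃_{j/2})^{−γ} + h_x^{5−γ} + h_y^{5−γ}), where η_{i/2} = min{x_{i/2} − a, b − x_{i/2}} and η̃_{j/2} = min{y_{j/2} − c, d − y_{j/2}}. -/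

import Mathlib

open MeasureTheory

/-- The piecewise quadratic Lagrange basis function attached to the node
`a + l·h/2` of the grid with integer nodes `a + k·h` (`k = 0, …, M`) and
half-integer midpoints. For odd `l` it is the interior bump
`4(x − x_{(l−1)/2})(x_{(l+1)/2} − x)/h²` on its cell, and for even `l` it is the
usual quadratic nodal basis function supported on the two adjacent cells. -/
noncomputable def quadBasis (a h : ℝ) (l : ℕ) (x : ℝ) : ℝ :=
  if l % 2 = 1 then
    if a + ((l : ℝ) - 1) * h / 2 ≤ x ∧ x ≤ a + ((l : ℝ) + 1) * h / 2 then
      4 * (x - (a + ((l : ℝ) - 1) * h / 2)) * ((a + ((l : ℝ) + 1) * h / 2) - x) / h ^ 2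
    else 0
  else
    if a + ((l : ℝ) - 2) * h / 2 ≤ x ∧ x ≤ a + (l : ℝ) * h / 2 then
      (x - (a + ((l : ℝ) - 2) * h / 2)) *
        (2 * x - ((a + (l : ℝ) * h / 2) + (a + ((l : ℝ) - 2) * h / 2))) / h ^ 2
    else if a + (l : ℝ) * h / 2 ≤ x ∧ x ≤ a + ((l : ℝ) + 2) * h / 2 then
      ((a + ((l : ℝ) + 2) * h / 2) - x) *
        (((a + ((l : ℝ) + 2) * h / 2) + (a + (l : ℝ) * h / 2)) - 2 * x) / h ^ 2
    else 0

/-- The piecewise Lagrange quadratic interpolant of `u` on the tensor grid with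
nodes `(a + l·h_x/2, c + r·h_y/2)`, `l = 0, …, 2M_x`, `r = 0, …, 2M_y`. -/
noncomputable def quadInterp (a c hx hy : ℝ) (Mx My : ℕ) (u : ℝ → ℝ → ℝ)
    (x y : ℝ) : ℝ :=
  ∑ l ∈ Finset.range (2 * Mx + 1), ∑ r ∈ Finset.range (2 * My + 1),
    quadBasis a hx l x * quadBasis c hy r y *
      u (a + (l : ℝ) * hx / 2) (c + (r : ℝ) * hy / 2)

/-- `f` has three derivatives on `[a, b]`, the third being bounded and Lipschitz with constant
`K`. -/
def HasLipschitzThirdDeriv (f : ℝ → ℝ) (a b K : ℝ) : Prop :=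
  ∃ f₁ f₂ f₃ : ℝ → ℝ,
    (∀ x ∈ Set.Icc a b, HasDerivWithinAt f (f₁ x) (Set.Icc a b) x) ∧
    (∀ x ∈ Set.Icc a b, HasDerivWithinAt f₁ (f₂ x) (Set.Icc a b) x) ∧
    (∀ x ∈ Set.Icc a b, HasDerivWithinAt f₂ (f₃ x) (Set.Icc a b) x) ∧
    (∀ x ∈ Set.Icc a b, |f₃ x| ≤ K) ∧
    ∀ x ∈ Set.Icc a b, ∀ y ∈ Set.Icc a b, |f₃ x - f₃ y| ≤ K * |x - y|

theorem exists_partial_deriv_fst {a b c d : ℝ} (hab : a < b) (hcd : c < d) {n m : ℕ}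
    (hnm : m + 1 ≤ n) {F : ℝ × ℝ → ℝ}
    (hF : ContDiffOn ℝ n F (Set.Icc a b ×ˢ Set.Icc c d)) :
    ∃ F' : ℝ × ℝ → ℝ, ContDiffOn ℝ m F' (Set.Icc a b ×ˢ Set.Icc c d) ∧
      ∀ y ∈ Set.Icc c d, ∀ x ∈ Set.Icc a b,
        HasDerivWithinAt (fun t => F (t, y)) (F' (x, y)) (Set.Icc a b) x := by
  set S := Set.Icc a b ×ˢ Set.Icc c d with hS
  have hu : UniqueDiffOn ℝ S := (uniqueDiffOn_Icc hab).prod (uniqueDiffOn_Icc hcd)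
  refine ⟨fun p => fderivWithin ℝ F S p (1, 0), ?_, ?_⟩
  · exact (hF.fderivWithin hu (by exact_mod_cast hnm)).clm_apply contDiffOn_const
  · intro y hy x hx
    have h1 : HasFDerivWithinAt F (fderivWithin ℝ F S (x, y)) S (x, y) :=
      (hF.differentiableOn (by
        have : n ≠ 0 := by omega
        exact_mod_cast this) _ ⟨hx, hy⟩).hasFDerivWithinAt
    have h2 : HasDerivWithinAt (fun t : ℝ => (t, y)) ((1 : ℝ), (0 : ℝ)) (Set.Icc a b) x :=
      (hasDerivWithinAt_id x _).prodMk (hasDerivWithinAt_const x _ y)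
    exact h1.comp_hasDerivWithinAt x h2 (fun t ht => Set.mk_mem_prod ht hy)

theorem exists_hasLipschitzThirdDeriv_slice {a b c d : ℝ} (hab : a < b) (hcd : c < d)
    {F : ℝ × ℝ → ℝ} (hF : ContDiffOn ℝ 6 F (Set.Icc a b ×ˢ Set.Icc c d)) :
    ∃ K, 0 ≤ K ∧ ∀ y ∈ Set.Icc c d, HasLipschitzThirdDeriv (fun x => F (x, y)) a b K := by
  obtain ⟨F₁, c₁, d₁⟩ := exists_partial_deriv_fst hab hcd (n := 6) (m := 5) (by norm_num)
    (by exact_mod_cast hF)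
  obtain ⟨F₂, c₂, d₂⟩ := exists_partial_deriv_fst hab hcd (m := 4) (by norm_num) c₁
  obtain ⟨F₃, c₃, d₃⟩ := exists_partial_deriv_fst hab hcd (m := 3) (by norm_num) c₂
  obtain ⟨F₄, c₄, d₄⟩ := exists_partial_deriv_fst hab hcd (m := 2) (by norm_num) c₃
  have hS : IsCompact (Set.Icc a b ×ˢ Set.Icc c d) := isCompact_Icc.prod isCompact_Icc
  obtain ⟨K₃, h₃⟩ := hS.exists_bound_of_continuousOn c₃.continuousOn
  obtain ⟨K₄, h₄⟩ := hS.exists_bound_of_continuousOn c₄.continuousOn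
  have hm : (a, c) ∈ Set.Icc a b ×ˢ Set.Icc c d :=
    ⟨Set.left_mem_Icc.2 hab.le, Set.left_mem_Icc.2 hcd.le⟩
  refine ⟨max K₃ K₄, (norm_nonneg _).trans ((h₃ _ hm).trans (le_max_left _ _)), fun y hy => ?_⟩
  refine ⟨fun x => F₁ (x, y), fun x => F₂ (x, y), fun x => F₃ (x, y), d₁ y hy, d₂ y hy, d₃ y hy,
    fun x hx => (h₃ (x, y) ⟨hx, hy⟩).trans (le_max_left _ _), fun x hx z hz => ?_⟩
  exact (convex_Icc a b).norm_image_sub_le_of_norm_hasDerivWithin_le (d₄ y hy)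
    (fun t ht => (h₄ (t, y) ⟨ht, hy⟩).trans (le_max_right _ _)) hz hx

theorem abs_le_pow_succ_of_deriv_le {g g' : ℝ → ℝ} {a b m C : ℝ} {n : ℕ}
    (hm : m ∈ Set.Icc a b) (hC : 0 ≤ C)
    (hg : ∀ x ∈ Set.Icc a b, HasDerivWithinAt g (g' x) (Set.Icc a b) x)
    (hg' : ∀ x ∈ Set.Icc a b, |g' x| ≤ C * |x - m| ^ n) (h0 : g m = 0) :
    ∀ x ∈ Set.Icc a b, |g x| ≤ C * |x - m| ^ (n + 1) := by
  intro x hx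
  have hsub : Set.uIcc m x ⊆ Set.Icc a b := Set.uIcc_subset_Icc hm hx
  have := (convex_uIcc m x).norm_image_sub_le_of_norm_hasDerivWithin_le
    (f := g) (f' := g') (C := C * |x - m| ^ n)
    (fun t ht => (hg t (hsub ht)).mono hsub)
    (fun t ht => (hg' t (hsub ht)).trans (mul_le_mul_of_nonneg_left
      (pow_le_pow_left₀ (abs_nonneg _) (Set.abs_sub_left_of_mem_uIcc ht) n) hC))
    Set.left_mem_uIcc Set.right_mem_uIcc
  rw [h0, sub_zero, Real.norm_eq_abs, Real.norm_eq_abs] at this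
  rw [pow_succ, ← mul_assoc]
  exact this

theorem taylor_remainder_le {f f₁ f₂ f₃ : ℝ → ℝ} {a b K m : ℝ} (hK : 0 ≤ K)
    (h₁ : ∀ x ∈ Set.Icc a b, HasDerivWithinAt f (f₁ x) (Set.Icc a b) x)
    (h₂ : ∀ x ∈ Set.Icc a b, HasDerivWithinAt f₁ (f₂ x) (Set.Icc a b) x)
    (h₃ : ∀ x ∈ Set.Icc a b, HasDerivWithinAt f₂ (f₃ x) (Set.Icc a b) x)
    (hL : ∀ x ∈ Set.Icc a b, ∀ y ∈ Set.Icc a b, |f₃ x - f₃ y| ≤ K * |x - y|)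
    (hm : m ∈ Set.Icc a b) :
    ∀ x ∈ Set.Icc a b, |f x - (f m + f₁ m * (x - m) + f₂ m / 2 * (x - m) ^ 2
      + f₃ m / 6 * (x - m) ^ 3)| ≤ K * |x - m| ^ 4 := by
  have hs (x : ℝ) : HasDerivWithinAt (fun t => t - m) 1 (Set.Icc a b) x :=
    (hasDerivWithinAt_id x _).sub_const m
  refine abs_le_pow_succ_of_deriv_le (n := 3)
    (g' := fun x => f₁ x - (f₁ m + f₂ m * (x - m) + f₃ m / 2 * (x - m) ^ 2)) hm hK ?_ ?_ (by simp)
  · intro x hx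
    refine ((h₁ x hx).sub (((((hs x).const_mul (f₁ m)).const_add (f m)).add
      (((hs x).pow 2).const_mul (f₂ m / 2))).add
        (((hs x).pow 3).const_mul (f₃ m / 6)))).congr_deriv ?_
    simp; ring
  refine abs_le_pow_succ_of_deriv_le (n := 2)
    (g' := fun x => f₂ x - (f₂ m + f₃ m * (x - m))) hm hK ?_ ?_ (by simp)
  · intro x hx
    refine ((h₂ x hx).sub ((((hs x).const_mul (f₂ m)).const_add (f₁ m)).add
      (((hs x).pow 2).const_mul (f₃ m / 2)))).congr_deriv ?_
    simp; ring
  refine abs_le_pow_succ_of_deriv_le (n := 1)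
    (g' := fun x => f₃ x - f₃ m) hm hK ?_ ?_ (by simp)
  · intro x hx
    refine ((h₃ x hx).sub (((hs x).const_mul (f₃ m)).const_add (f₂ m))).congr_deriv ?_
    simp
  intro x hx
  simpa using hL x hx m hm

theorem intervalIntegrable_abs_rpow {γ : ℝ} (hγ : γ < 1) (p q : ℝ) :
    IntervalIntegrable (fun t : ℝ => |t| ^ (-γ)) volume p q := by
  have key (c : ℝ) (hc : 0 ≤ c) : IntervalIntegrable (fun t : ℝ => |t| ^ (-γ)) volume 0 c := by
    refine (intervalIntegral.intervalIntegrable_rpow' (r := -γ) (by linarith)).congr ?_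
    intro t ht
    rw [Set.uIoc_of_le hc] at ht
    simp only [abs_of_pos ht.1]
  have key' (c : ℝ) : IntervalIntegrable (fun t : ℝ => |t| ^ (-γ)) volume 0 c := by
    rcases le_total 0 c with hc | hc
    · exact key c hc
    · rw [IntervalIntegrable.iff_comp_neg]
      simpa using key (-c) (by linarith)
  exact (key' p).symm.trans (key' q)

theorem intervalIntegrable_abs_const_add_rpow {γ : ℝ} (hγ : γ < 1) (s p q : ℝ) :
    IntervalIntegrable (fun t : ℝ => |s + t| ^ (-γ)) volume p q := by
  have := (intervalIntegrable_abs_rpow hγ (s + p) (s + q)).comp_add_left s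
  simpa using this

theorem intervalIntegrable_abs_const_sub_rpow {γ : ℝ} (hγ : γ < 1) (s p q : ℝ) :
    IntervalIntegrable (fun t : ℝ => |s - t| ^ (-γ)) volume p q := by
  simpa [abs_sub_comm, neg_add_eq_sub] using intervalIntegrable_abs_const_add_rpow hγ (-s) p q

theorem integral_abs_const_sub_rpow_le {γ a b s : ℝ} (hγ : γ < 1) (hs : s ∈ Set.Icc a b) :
    ∫ x in a..b, |s - x| ^ (-γ) ≤ ∫ t in (a - b)..(b - a), |t| ^ (-γ) := by
  have : ∫ x in a..b, |s - x| ^ (-γ) = ∫ t in (s - b)..(s - a), |t| ^ (-γ) :=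
    intervalIntegral.integral_comp_sub_left (fun t => |t| ^ (-γ)) s
  rw [this]
  refine intervalIntegral.integral_mono_interval ?_ ?_ ?_ ?_ (intervalIntegrable_abs_rpow hγ _ _)
  · linarith [hs.1]
  · linarith [hs.1, hs.2]
  · linarith [hs.2]
  · exact Filter.Eventually.of_forall fun t => Real.rpow_nonneg (abs_nonneg t) _

/-- The moment of the cubic interpolation error `t (t - h/2) (t - h)` on a cell of length `h`
against the kernel `|·|^(-γ)`, the cell starting at position `s` relative to the singularity. -/
noncomputable def cellMoment (γ h s : ℝ) : ℝ :=
  ∫ t in (0 : ℝ)..h, t * (t - h / 2) * (t - h) * |s + t| ^ (-γ)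

theorem abs_cubic_le {h t : ℝ} (ht : t ∈ Set.Icc 0 h) :
    |t * (t - h / 2) * (t - h)| ≤ h ^ 3 := by
  obtain ⟨h0, h1⟩ := ht
  have hh : 0 ≤ h := h0.trans h1
  rw [abs_mul, abs_mul, pow_succ, pow_two]
  have e1 : |t| ≤ h := abs_le.2 ⟨by linarith, h1⟩
  have e2 : |t - h / 2| ≤ h := abs_le.2 ⟨by linarith, by linarith⟩
  have e3 : |t - h| ≤ h := abs_le.2 ⟨by linarith, by linarith⟩
  gcongr

theorem integral_cubic (h : ℝ) : ∫ t in (0 : ℝ)..h, t * (t - h / 2) * (t - h) = 0 := by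
  have e : (fun t : ℝ => t * (t - h / 2) * (t - h)) =
      fun t => t ^ 3 - (3 * h / 2) * t ^ 2 + (h ^ 2 / 2) * t ^ 1 := by
    funext t; ring
  rw [e, intervalIntegral.integral_add (Continuous.intervalIntegrable (by fun_prop) _ _)
    (Continuous.intervalIntegrable (by fun_prop) _ _),
    intervalIntegral.integral_sub (Continuous.intervalIntegrable (by fun_prop) _ _)
    (Continuous.intervalIntegrable (by fun_prop) _ _)]
  simp only [intervalIntegral.integral_const_mul, integral_pow]
  push_cast
  ring

theorem cellMoment_reflect (γ h s : ℝ) : cellMoment γ h (-s - h) = -cellMoment γ h s := by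
  unfold cellMoment
  have := intervalIntegral.integral_comp_sub_left (a := 0) (b := h)
    (fun t : ℝ => t * (t - h / 2) * (t - h) * |s + t| ^ (-γ)) h
  rw [sub_self, sub_zero] at this
  rw [← this, ← intervalIntegral.integral_neg]
  congr 1
  funext t
  have : |s + (h - t)| = |-s - h + t| := by
    rw [← abs_neg]; congr 1; ring
  rw [this]; ring

theorem abs_cellMoment_le {γ h : ℝ} (hγ : γ < 1) (hh : 0 ≤ h) (s : ℝ) :
    |cellMoment γ h s| ≤ h ^ 3 * ∫ t in (0 : ℝ)..h, |s + t| ^ (-γ) := by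
  rw [cellMoment, ← intervalIntegral.integral_const_mul, ← Real.norm_eq_abs]
  refine intervalIntegral.norm_integral_le_of_norm_le hh (Filter.Eventually.of_forall ?_)
    ((intervalIntegrable_abs_const_add_rpow hγ s 0 h).const_mul _)
  intro t ht
  have hk : 0 ≤ |s + t| ^ (-γ) := Real.rpow_nonneg (abs_nonneg _) _
  rw [Real.norm_eq_abs, abs_mul, abs_of_nonneg hk]
  exact mul_le_mul_of_nonneg_right (abs_cubic_le ⟨ht.1.le, ht.2⟩) hk

theorem abs_cellMoment_le_sub {γ h s : ℝ} (hγ0 : 0 < γ) (hγ : γ < 1) (hh : 0 ≤ h) (hs : 0 < s) :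
    |cellMoment γ h s| ≤ h ^ 4 * (s ^ (-γ) - (s + h) ^ (-γ)) := by
  have hi := intervalIntegrable_abs_const_add_rpow hγ s 0 h
  have e : cellMoment γ h s =
      ∫ t in (0 : ℝ)..h, t * (t - h / 2) * (t - h) * (|s + t| ^ (-γ) - (s + h) ^ (-γ)) := by
    have e' (t : ℝ) : t * (t - h / 2) * (t - h) * (|s + t| ^ (-γ) - (s + h) ^ (-γ)) =
        t * (t - h / 2) * (t - h) * |s + t| ^ (-γ)
          - t * (t - h / 2) * (t - h) * (s + h) ^ (-γ) := mul_sub _ _ _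
    simp only [e']
    rw [cellMoment, intervalIntegral.integral_sub, intervalIntegral.integral_mul_const, integral_cubic]
    · ring
    · exact hi.continuousOn_mul (by fun_prop)
    · exact Continuous.intervalIntegrable (by fun_prop) _ _
  rw [e, ← Real.norm_eq_abs]
  have := intervalIntegral.norm_integral_le_of_norm_le_const (a := 0) (b := h)
    (C := h ^ 3 * (s ^ (-γ) - (s + h) ^ (-γ)))
    (f := fun t => t * (t - h / 2) * (t - h) * (|s + t| ^ (-γ) - (s + h) ^ (-γ))) ?_
  · refine this.trans (le_of_eq ?_)
    rw [sub_zero, abs_of_nonneg hh]; ring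
  · intro t ht
    rw [Set.uIoc_of_le hh] at ht
    have hst : 0 < s + t := by linarith [ht.1]
    rw [Real.norm_eq_abs, abs_mul, abs_of_pos hst]
    have u1 : (s + h) ^ (-γ) ≤ (s + t) ^ (-γ) :=
      Real.rpow_le_rpow_of_nonpos hst (by linarith [ht.2]) (by linarith)
    have u2 : (s + t) ^ (-γ) ≤ s ^ (-γ) :=
      Real.rpow_le_rpow_of_nonpos hs (by linarith [ht.1]) (by linarith)
    rw [abs_of_nonneg (sub_nonneg.2 u1)]
    exact mul_le_mul (abs_cubic_le ⟨ht.1.le, ht.2⟩) (by linarith) (by linarith) (by positivity)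

theorem rpow_sub_rpow_le {γ h s : ℝ} (hγ : γ < 1) (hh : 0 ≤ h) (hs : 0 < s) :
    s ^ (-γ) - (s + h) ^ (-γ) ≤ (s + h) ^ (-γ) * (h / s) := by
  have h1 : 1 ≤ (s + h) / s := by rw [one_le_div hs]; linarith
  have h2 : ((s + h) / s) ^ γ ≤ (s + h) / s := by
    conv_rhs => rw [← Real.rpow_one ((s + h) / s)]
    exact Real.rpow_le_rpow_of_exponent_le h1 hγ.le
  have h3 : s ^ (-γ) = (s + h) ^ (-γ) * ((s + h) / s) ^ γ := by
    have hp : 0 < (s + h) ^ γ := Real.rpow_pos_of_pos (by linarith) _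
    rw [Real.div_rpow (by linarith) hs.le, Real.rpow_neg hs.le, Real.rpow_neg (by linarith)]
    field_simp
  have h4 : (s + h) / s = 1 + h / s := by field_simp
  have h5 : 0 ≤ (s + h) ^ (-γ) := Real.rpow_nonneg (by linarith) _
  rw [h4] at h2 h3
  nlinarith [mul_le_mul_of_nonneg_left h2 h5]

theorem abs_mul_abs_cellMoment_le_of_pos {γ h s : ℝ} (hγ0 : 0 < γ) (hγ : γ < 1) (hh : 0 < h)
    (hs : h / 2 ≤ s) :
    |s + h / 2| * |cellMoment γ h s| ≤ 3 * h ^ 4 * ∫ t in (0 : ℝ)..h, |s + t| ^ (-γ) := by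
  have hs0 : 0 < s := by linarith
  have hJ := abs_cellMoment_le_sub hγ0 hγ hh.le hs0
  have hD := rpow_sub_rpow_le hγ hh.le hs0
  have hI : h * (s + h) ^ (-γ) ≤ ∫ t in (0 : ℝ)..h, |s + t| ^ (-γ) := by
    have := intervalIntegral.integral_mono_on hh.le
      (intervalIntegrable_const (μ := volume) (c := (s + h) ^ (-γ)))
      (intervalIntegrable_abs_const_add_rpow hγ s 0 h) (fun t ht => by
        rw [abs_of_pos (by linarith [ht.1])]
        exact Real.rpow_le_rpow_of_nonpos (by linarith [ht.1]) (by linarith [ht.2])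
          (by linarith))
    simpa using this
  have hP : 0 ≤ (s + h) ^ (-γ) := Real.rpow_nonneg (by linarith) _
  rw [abs_of_pos (by linarith)]
  have h3 : (s + h / 2) * (h / s) ≤ 3 * h := by
    rw [mul_div_assoc', div_le_iff₀ hs0]; nlinarith
  calc (s + h / 2) * |cellMoment γ h s|
      ≤ (s + h / 2) * (h ^ 4 * ((s + h) ^ (-γ) * (h / s))) := by gcongr; exact hJ.trans (by gcongr)
    _ = h ^ 4 * (s + h) ^ (-γ) * ((s + h / 2) * (h / s)) := by ring
    _ ≤ h ^ 4 * (s + h) ^ (-γ) * (3 * h) := by gcongr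
    _ = 3 * h ^ 4 * (h * (s + h) ^ (-γ)) := by ring
    _ ≤ _ := by gcongr

theorem abs_mul_abs_cellMoment_le {γ h : ℝ} (hγ0 : 0 < γ) (hγ : γ < 1) (hh : 0 < h)
    {k : ℤ} {s : ℝ} (hs : s = k * h / 2) :
    |s + h / 2| * |cellMoment γ h s| ≤ 3 * h ^ 4 * ∫ t in (0 : ℝ)..h, |s + t| ^ (-γ) := by
  rcases le_or_gt 1 k with hk | hk
  · refine abs_mul_abs_cellMoment_le_of_pos hγ0 hγ hh ?_
    have : (1 : ℝ) ≤ k := by exact_mod_cast hk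
    rw [hs]; nlinarith
  rcases le_or_gt k (-3) with hk' | hk'
  · have h1 := abs_mul_abs_cellMoment_le_of_pos (s := -s - h) hγ0 hγ hh (by
      have : (k : ℝ) ≤ -3 := by exact_mod_cast hk'
      rw [hs]; nlinarith)
    rw [cellMoment_reflect, abs_neg] at h1
    have h2 : |-s - h + h / 2| = |s + h / 2| := by rw [← abs_neg]; congr 1; ring
    have h3 : ∫ t in (0 : ℝ)..h, |-s - h + t| ^ (-γ) = ∫ t in (0 : ℝ)..h, |s + t| ^ (-γ) := by
      have := intervalIntegral.integral_comp_sub_left (a := 0) (b := h)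
        (fun t : ℝ => |s + t| ^ (-γ)) h
      rw [sub_self, sub_zero] at this
      rw [← this]
      congr 1; funext t
      congr 1
      rw [← abs_neg]; congr 1; ring
    rwa [h2, h3] at h1
  · have hb : |s + h / 2| ≤ 3 * h := by
      have h1 : (k : ℝ) ≤ 0 := by exact_mod_cast (by omega : k ≤ 0)
      have h2 : (-2 : ℝ) ≤ k := by exact_mod_cast (by omega : -2 ≤ k)
      rw [hs, abs_le]; constructor <;> nlinarith
    calc |s + h / 2| * |cellMoment γ h s|
        ≤ (3 * h) * (h ^ 3 * ∫ t in (0 : ℝ)..h, |s + t| ^ (-γ)) :=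
          mul_le_mul hb (abs_cellMoment_le hγ hh.le s) (abs_nonneg _) (by linarith)
      _ = _ := by ring

theorem abs_sum_cellMoment_le_of_le {γ h : ℝ} (hγ0 : 0 < γ) (hγ : γ < 1) (hh : 0 < h) {M i : ℕ}
    (hi : 1 ≤ i) (hiM : i ≤ M) :
    |∑ l ∈ Finset.range M, cellMoment γ h ((2 * l - i) * h / 2)| ≤ h ^ 4 * (i * h / 2) ^ (-γ) := by
  have hi' : (1 : ℝ) ≤ i := by exact_mod_cast hi
  have hsym : ∑ l ∈ Finset.range i, cellMoment γ h ((2 * l - i) * h / 2) = 0 := by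
    have h1 := Finset.sum_range_reflect (fun l : ℕ => cellMoment γ h ((2 * l - i) * h / 2)) i
    have h2 : ∑ l ∈ Finset.range i, cellMoment γ h ((2 * ((i - 1 - l : ℕ) : ℝ) - i) * h / 2)
        = -∑ l ∈ Finset.range i, cellMoment γ h ((2 * l - i) * h / 2) := by
      rw [← Finset.sum_neg_distrib]
      refine Finset.sum_congr rfl fun l hl => ?_
      rw [← cellMoment_reflect]
      congr 1
      have := Finset.mem_range.1 hl
      rw [Nat.sub_sub, Nat.cast_sub (by omega)]
      push_cast; ring
    linarith
  obtain ⟨n, rfl⟩ := Nat.exists_eq_add_of_le hiM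
  rw [Finset.sum_range_add, hsym, zero_add]
  set P : ℕ → ℝ := fun l => -(h ^ 4 * (((i : ℝ) / 2 + l) * h) ^ (-γ)) with hP
  calc |∑ l ∈ Finset.range n, cellMoment γ h ((2 * ((i + l : ℕ) : ℝ) - i) * h / 2)|
      ≤ ∑ l ∈ Finset.range n, |cellMoment γ h ((2 * ((i + l : ℕ) : ℝ) - i) * h / 2)| :=
        Finset.abs_sum_le_sum_abs _ _
    _ ≤ ∑ l ∈ Finset.range n, (P (l + 1) - P l) := by
        refine Finset.sum_le_sum fun l _ => ?_
        have e : (2 * ((i + l : ℕ) : ℝ) - i) * h / 2 = ((i : ℝ) / 2 + l) * h := by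
          push_cast; ring
        rw [e]
        refine (abs_cellMoment_le_sub hγ0 hγ hh.le (by positivity)).trans (le_of_eq ?_)
        have e2 : ((i : ℝ) / 2 + l) * h + h = ((i : ℝ) / 2 + (l + 1 : ℕ)) * h := by
          push_cast; ring
        rw [hP, e2]; ring
    _ = P n - P 0 := Finset.sum_range_sub P n
    _ ≤ _ := by
        have : 0 ≤ h ^ 4 * (((i : ℝ) / 2 + n) * h) ^ (-γ) := by positivity
        have e : ((i : ℝ) / 2 + (0 : ℕ)) * h = i * h / 2 := by push_cast; ring
        simp only [hP, e]
        linarith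

theorem abs_sum_cellMoment_le {γ h : ℝ} (hγ0 : 0 < γ) (hγ : γ < 1) (hh : 0 < h) {M i : ℕ}
    (hi : 1 ≤ i) (hiM : i ≤ 2 * M - 1) :
    |∑ l ∈ Finset.range M, cellMoment γ h ((2 * l - i) * h / 2)| ≤
      h ^ 4 * (min (i * h / 2) ((2 * M - i) * h / 2)) ^ (-γ) := by
  rcases le_total i M with h1 | h1
  · have : (i : ℝ) ≤ M := by exact_mod_cast h1
    rw [min_eq_left (by nlinarith)]
    exact abs_sum_cellMoment_le_of_le hγ0 hγ hh hi h1
  · have h1' : (M : ℝ) ≤ i := by exact_mod_cast h1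
    rw [min_eq_right (by nlinarith)]
    have h2 := abs_sum_cellMoment_le_of_le hγ0 hγ hh (M := M) (i := 2 * M - i) (by omega) (by omega)
    have hc : ((2 * M - i : ℕ) : ℝ) = 2 * M - i := by
      rw [Nat.cast_sub (by omega)]; push_cast; ring
    rw [hc] at h2
    rw [← Finset.sum_range_reflect]
    convert h2 using 1
    rw [← abs_neg, ← Finset.sum_neg_distrib]
    congr 1
    refine Finset.sum_congr rfl fun l hl => ?_
    rw [← cellMoment_reflect]
    congr 1
    have := Finset.mem_range.1 hl
    rw [Nat.sub_sub, Nat.cast_sub (by omega)]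
    push_cast; ring

theorem quadBasis_odd (a h : ℝ) (q : ℕ) (x : ℝ) :
    quadBasis a h (2 * q + 1) x = if a + q * h ≤ x ∧ x ≤ a + (q + 1) * h then
      4 * (x - (a + q * h)) * ((a + (q + 1) * h) - x) / h ^ 2 else 0 := by
  have e1 : a + (((2 * q + 1 : ℕ) : ℝ) - 1) * h / 2 = a + q * h := by push_cast; ring
  have e2 : a + (((2 * q + 1 : ℕ) : ℝ) + 1) * h / 2 = a + (q + 1) * h := by push_cast; ring
  rw [quadBasis, if_pos (by omega), e1, e2]

theorem quadBasis_even (a h : ℝ) (q : ℕ) (x : ℝ) :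
    quadBasis a h (2 * q) x =
      if a + (q - 1) * h ≤ x ∧ x ≤ a + q * h then
        (x - (a + (q - 1) * h)) * (2 * x - ((a + q * h) + (a + (q - 1) * h))) / h ^ 2
      else if a + q * h ≤ x ∧ x ≤ a + (q + 1) * h then
        ((a + (q + 1) * h) - x) * (((a + (q + 1) * h) + (a + q * h)) - 2 * x) / h ^ 2
      else 0 := by
  have e0 : a + ((2 * q : ℕ) : ℝ) * h / 2 = a + q * h := by push_cast; ring
  have e1 : a + (((2 * q : ℕ) : ℝ) - 2) * h / 2 = a + (q - 1) * h := by push_cast; ring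
  have e2 : a + (((2 * q : ℕ) : ℝ) + 2) * h / 2 = a + (q + 1) * h := by push_cast; ring
  rw [quadBasis, if_neg (by omega), e0, e1, e2]

theorem continuous_quadBasis (a : ℝ) {h : ℝ} (hh : 0 < h) (l : ℕ) :
    Continuous (quadBasis a h l) := by
  obtain ⟨q, rfl | rfl⟩ := Nat.even_or_odd' l
  · have e : quadBasis a h (2 * q) = fun x => (1 - min (|x - (a + q * h)| / h) 1) *
        (1 - 2 * min (|x - (a + q * h)| / h) 1) := by
      funext x
      rw [quadBasis_even]
      split_ifs with h1 h2
      · rw [abs_of_nonpos (by linarith [h1.2]),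
          min_eq_left (by rw [div_le_one hh]; nlinarith [h1.1])]
        field_simp
        ring
      · rw [abs_of_nonneg (by linarith [h2.1]),
          min_eq_left (by rw [div_le_one hh]; nlinarith [h2.2])]
        field_simp
        ring
      · rw [min_eq_right]
        · ring
        rw [one_le_div hh]
        by_contra! hlt
        rw [abs_lt] at hlt
        rcases le_total x (a + q * h) with h3 | h3
        · exact h1 ⟨by nlinarith [hlt.1], h3⟩
        · exact h2 ⟨h3, by nlinarith [hlt.2]⟩
    rw [e]; fun_prop
  · have e : quadBasis a h (2 * q + 1) = fun x =>
        max 0 (4 * (x - (a + q * h)) * ((a + (q + 1) * h) - x) / h ^ 2) := by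
      funext x
      rw [quadBasis_odd]
      split_ifs with h1
      · rw [max_eq_right]
        have := sub_nonneg.2 h1.1
        have := sub_nonneg.2 h1.2
        positivity
      · rw [max_eq_left]
        refine div_nonpos_of_nonpos_of_nonneg ?_ (by positivity)
        have h3 : a + q * h < a + (q + 1) * h := by nlinarith
        rcases not_and_or.1 h1 with h2 | h2
        · nlinarith
        · nlinarith
    rw [e]; fun_prop

theorem quadBasis_eq_zero {a h x : ℝ} (hh : 0 < h) {k l : ℕ}
    (hx : x ∈ Set.Icc (a + k * h) (a + (k + 1) * h))
    (h0 : l ≠ 2 * k) (h1 : l ≠ 2 * k + 1) (h2 : l ≠ 2 * k + 2) : quadBasis a h l x = 0 := by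
  obtain ⟨hx0, hx1⟩ := hx
  have key (m n : ℕ) (hmn : m + 1 ≤ n) : (m : ℝ) * h + h ≤ n * h := by
    have : (m : ℝ) + 1 ≤ n := by exact_mod_cast hmn
    nlinarith
  obtain ⟨q, rfl | rfl⟩ := Nat.even_or_odd' l
  · rw [quadBasis_even]
    have hq : q + 1 ≤ k ∨ (k + 1) + 1 ≤ q := by omega
    rcases hq with hq | hq
    · have hk := key _ _ hq
      rw [if_neg (by rintro ⟨-, h⟩; linarith)]
      split_ifs with h3
      · have : a + (q + 1) * h - x = 0 := by linarith [h3.2]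
        rw [this]; simp
      · rfl
    · have hk := key _ _ hq
      push_cast at hk
      split_ifs with h3 h4
      · have : x - (a + (q - 1) * h) = 0 := by linarith [h3.1]
        rw [this]; simp
      · linarith [h4.1]
      · rfl
  · rw [quadBasis_odd]
    split_ifs with h3
    · have hq : q + 1 ≤ k ∨ k + 1 ≤ q := by omega
      rcases hq with hq | hq
      · have : a + (q + 1) * h - x = 0 := by linarith [h3.2, key _ _ hq]
        rw [this]; simp
      · have : x - (a + q * h) = 0 := by linarith [h3.1, key _ _ hq]
        rw [this]; simp
    · rfl

theorem quadBasis_cell {a h t : ℝ} (hh : 0 < h) (k : ℕ) (ht : t ∈ Set.Icc 0 h) :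
    quadBasis a h (2 * k) (a + k * h + t) = (1 - t / h) * (1 - 2 * (t / h)) ∧
    quadBasis a h (2 * k + 1) (a + k * h + t) = 4 * (t / h) * (1 - t / h) ∧
    quadBasis a h (2 * k + 2) (a + k * h + t) = t / h * (2 * (t / h) - 1) := by
  obtain ⟨h0, h1⟩ := ht
  refine ⟨?_, ?_, ?_⟩
  · rw [quadBasis_even]
    split_ifs with h2 h3
    · have : t = 0 := by linarith [h2.2]
      subst this
      field_simp
      ring
    · field_simp
      ring
    · exact absurd ⟨by linarith, by linarith⟩ h3
  · rw [quadBasis_odd, if_pos ⟨by linarith, by linarith⟩]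
    field_simp
    ring
  · have := quadBasis_even a h (k + 1) (a + k * h + t)
    rw [mul_add, mul_one] at this
    rw [this, if_pos (by push_cast; constructor <;> linarith)]
    push_cast
    field_simp
    ring

theorem quadBasis_cell_abs_le {a h t : ℝ} (hh : 0 < h) (k : ℕ) (ht : t ∈ Set.Icc 0 h) :
    |quadBasis a h (2 * k) (a + k * h + t)| ≤ 1 ∧
    |quadBasis a h (2 * k + 1) (a + k * h + t)| ≤ 1 ∧
    |quadBasis a h (2 * k + 2) (a + k * h + t)| ≤ 1 := by
  obtain ⟨e0, e1, e2⟩ := quadBasis_cell (a := a) hh k ht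
  rw [e0, e1, e2]
  have h0 : 0 ≤ t / h := div_nonneg ht.1 hh.le
  have h1 : t / h ≤ 1 := (div_le_one hh).2 ht.2
  generalize t / h = r at h0 h1
  refine ⟨abs_le.2 ⟨?_, ?_⟩, abs_le.2 ⟨?_, ?_⟩, abs_le.2 ⟨?_, ?_⟩⟩ <;>
    nlinarith [sq_nonneg (r - 1 / 2), sq_nonneg r, sq_nonneg (r - 1)]

theorem sum_eq_three {M k : ℕ} (hk : k < M) {g : ℕ → ℝ}
    (hg : ∀ l, l ≠ 2 * k → l ≠ 2 * k + 1 → l ≠ 2 * k + 2 → g l = 0) :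
    ∑ l ∈ Finset.range (2 * M + 1), g l = g (2 * k) + g (2 * k + 1) + g (2 * k + 2) := by
  rw [← Finset.sum_subset (s₁ := {2 * k, 2 * k + 1, 2 * k + 2})]
  · rw [Finset.sum_insert (by simp), Finset.sum_insert (by simp), Finset.sum_singleton, add_assoc]
  · intro l hl
    simp only [Finset.mem_insert, Finset.mem_singleton] at hl
    simp only [Finset.mem_range]
    omega
  · intro l _ hl
    simp only [Finset.mem_insert, Finset.mem_singleton, not_or] at hl
    exact hg l hl.1 hl.2.1 hl.2.2

theorem exists_cell {a b x : ℝ} {M : ℕ} (hM : 1 ≤ M) (hab : a < b) (hx : x ∈ Set.Icc a b) :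
    ∃ k < M, ∃ t ∈ Set.Icc 0 ((b - a) / M), x = a + k * ((b - a) / M) + t := by
  have hM' : (0 : ℝ) < M := by exact_mod_cast hM
  set h := (b - a) / M with hh
  have hpos : 0 < h := div_pos (sub_pos.2 hab) hM'
  have hb : b = a + M * h := by rw [hh]; field_simp; ring
  have hz : 0 ≤ (x - a) / h := div_nonneg (by linarith [hx.1]) hpos.le
  have hf := Nat.floor_le hz
  have hf' := Nat.lt_floor_add_one ((x - a) / h)
  rw [le_div_iff₀ hpos] at hf
  rw [div_lt_iff₀ hpos] at hf'
  rcases lt_or_ge ⌊(x - a) / h⌋₊ M with hlt | hge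
  · exact ⟨_, hlt, x - a - ⌊(x - a) / h⌋₊ * h, ⟨by linarith, by linarith⟩, by ring⟩
  · have : (M : ℝ) ≤ ⌊(x - a) / h⌋₊ := by exact_mod_cast hge
    have hxb : x = b := le_antisymm hx.2 (by nlinarith)
    refine ⟨M - 1, by omega, h, ⟨hpos.le, le_rfl⟩, ?_⟩
    rw [Nat.cast_sub hM, hxb, hb]; push_cast; ring

theorem sum_abs_quadBasis_le {a b x : ℝ} {M : ℕ} (hM : 1 ≤ M) (hab : a < b)
    (hx : x ∈ Set.Icc a b) :
    ∑ l ∈ Finset.range (2 * M + 1), |quadBasis a ((b - a) / M) l x| ≤ 3 := by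
  have hpos : 0 < (b - a) / M := div_pos (sub_pos.2 hab) (by exact_mod_cast hM)
  obtain ⟨k, hk, t, ht, rfl⟩ := exists_cell hM hab hx
  rw [sum_eq_three hk fun l h0 h1 h2 => by
    rw [quadBasis_eq_zero hpos ⟨by linarith [ht.1], by linarith [ht.2]⟩ h0 h1 h2, abs_zero]]
  have := quadBasis_cell_abs_le (a := a) hpos k ht
  linarith [this.1, this.2.1, this.2.2]

/-- The univariate piecewise quadratic Lagrange interpolant. -/
noncomputable def quadInterpOne (a h : ℝ) (M : ℕ) (f : ℝ → ℝ) (x : ℝ) : ℝ :=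
  ∑ l ∈ Finset.range (2 * M + 1), quadBasis a h l x * f (a + (l : ℝ) * h / 2)

theorem continuous_quadInterpOne (a : ℝ) {h : ℝ} (hh : 0 < h) (M : ℕ) (f : ℝ → ℝ) :
    Continuous (quadInterpOne a h M f) :=
  continuous_finsetSum _ fun l _ => (continuous_quadBasis a hh l).mul continuous_const

theorem quadInterp_eq (a c hx hy : ℝ) (Mx My : ℕ) (u : ℝ → ℝ → ℝ) (x y : ℝ) :
    quadInterp a c hx hy Mx My u x y = ∑ l ∈ Finset.range (2 * Mx + 1),
      quadBasis a hx l x * quadInterpOne c hy My (u (a + (l : ℝ) * hx / 2)) y := by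
  simp only [quadInterp, quadInterpOne, Finset.mul_sum, mul_assoc]

theorem abs_interp_error_sub_le {f f₁ f₂ f₃ : ℝ → ℝ} {a b K h t : ℝ} {M k : ℕ} (hK : 0 ≤ K)
    (h₁ : ∀ x ∈ Set.Icc a b, HasDerivWithinAt f (f₁ x) (Set.Icc a b) x)
    (h₂ : ∀ x ∈ Set.Icc a b, HasDerivWithinAt f₁ (f₂ x) (Set.Icc a b) x)
    (h₃ : ∀ x ∈ Set.Icc a b, HasDerivWithinAt f₂ (f₃ x) (Set.Icc a b) x)
    (hL : ∀ x ∈ Set.Icc a b, ∀ y ∈ Set.Icc a b, |f₃ x - f₃ y| ≤ K * |x - y|)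
    (hh : 0 < h) (hb : b = a + M * h) (hk : k < M) (ht : t ∈ Set.Icc 0 h) :
    |f (a + k * h + t) - quadInterpOne a h M f (a + k * h + t)
      - f₃ (a + k * h + h / 2) / 6 * (t * (t - h / 2) * (t - h))| ≤ 4 * K * h ^ 4 := by
  have hkM : (k : ℝ) * h + h ≤ M * h := by
    have : (k : ℝ) + 1 ≤ M := by exact_mod_cast hk
    nlinarith
  have hk0 : 0 ≤ (k : ℝ) * h := by positivity
  set p := a + k * h with hp
  set m := p + h / 2 with hm
  clear_value m
  have hmem (r : ℝ) (hr : r ∈ Set.Icc 0 h) : p + r ∈ Set.Icc a b :=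
    ⟨by linarith [hr.1], by linarith [hr.2]⟩
  obtain ⟨R, hR⟩ : ∃ R : ℝ → ℝ, ∀ x, R x = f x - (f m + f₁ m * (x - m) + f₂ m / 2 * (x - m) ^ 2
      + f₃ m / 6 * (x - m) ^ 3) := ⟨_, fun _ => rfl⟩
  have hf (x : ℝ) : f x = f m + f₁ m * (x - m) + f₂ m / 2 * (x - m) ^ 2
      + f₃ m / 6 * (x - m) ^ 3 + R x := by rw [hR]; ring
  have hRb (r : ℝ) (hr : r ∈ Set.Icc 0 h) : |R (p + r)| ≤ K * h ^ 4 := by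
    have := taylor_remainder_le hK h₁ h₂ h₃ hL (m := m)
      (hm ▸ hmem (h / 2) ⟨by linarith, by linarith⟩) (p + r) (hmem r hr)
    rw [← hR] at this
    refine this.trans ?_
    have h4 : |p + r - m| ≤ h := abs_le.2 ⟨by linarith [hr.1], by linarith [hr.2]⟩
    gcongr
  obtain ⟨n0, n1, n2⟩ := quadBasis_cell_abs_le (a := a) hh k ht
  obtain ⟨e0, e1, e2⟩ := quadBasis_cell (a := a) hh k ht
  rw [quadInterpOne, sum_eq_three hk fun l h0 h1 h2 => by
    rw [quadBasis_eq_zero hh ⟨by linarith [ht.1], by linarith [ht.2]⟩ h0 h1 h2, zero_mul]]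
  have x0 : a + ((2 * k : ℕ) : ℝ) * h / 2 = p + 0 := by rw [hp]; push_cast; ring
  have x1 : a + ((2 * k + 1 : ℕ) : ℝ) * h / 2 = p + h / 2 := by rw [hp]; push_cast; ring
  have x2 : a + ((2 * k + 2 : ℕ) : ℝ) * h / 2 = p + h := by rw [hp]; push_cast; ring
  rw [x0, x1, x2]
  rw [← hp] at n0 n1 n2 e0 e1 e2
  have key : f (p + t) - (quadBasis a h (2 * k) (p + t) * f (p + 0)
      + quadBasis a h (2 * k + 1) (p + t) * f (p + h / 2)
      + quadBasis a h (2 * k + 2) (p + t) * f (p + h))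
      - f₃ m / 6 * (t * (t - h / 2) * (t - h)) =
      R (p + t) - quadBasis a h (2 * k) (p + t) * R (p + 0)
      - quadBasis a h (2 * k + 1) (p + t) * R (p + h / 2)
      - quadBasis a h (2 * k + 2) (p + t) * R (p + h) := by
    rw [hf (p + t), hf (p + 0), hf (p + h / 2), hf (p + h), e0, e1, e2, hm]
    generalize R (p + t) = A, R (p + 0) = B, R (p + h / 2) = D, R (p + h) = E
    field_simp
    ring
  rw [key]
  have b (q r : ℝ) (hq : |q| ≤ 1) (hr : r ∈ Set.Icc 0 h) : |q * R (p + r)| ≤ K * h ^ 4 := by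
    rw [abs_mul]
    calc |q| * |R (p + r)| ≤ 1 * (K * h ^ 4) :=
          mul_le_mul hq (hRb r hr) (abs_nonneg _) zero_le_one
      _ = _ := one_mul _
  have b0 := abs_le.1 (b _ 0 n0 ⟨le_rfl, hh.le⟩)
  have b1 := abs_le.1 (b _ (h / 2) n1 ⟨by linarith, by linarith⟩)
  have b2 := abs_le.1 (b _ h n2 ⟨hh.le, le_rfl⟩)
  have b3 := abs_le.1 (hRb t ht)
  exact abs_le.2 ⟨by linarith [b0.2, b1.2, b2.2, b3.1], by linarith [b0.1, b1.1, b2.1, b3.2]⟩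

theorem HasLipschitzThirdDeriv.abs_integral_interp_error_le {γ a b K : ℝ} (hγ0 : 0 < γ)
    (hγ : γ < 1) (hab : a < b) (hK : 0 ≤ K) {f : ℝ → ℝ} (hf : HasLipschitzThirdDeriv f a b K)
    {M i : ℕ} (hM : 1 ≤ M) (hi : 1 ≤ i) (hiM : i ≤ 2 * M - 1) {h xi : ℝ} (hh : h = (b - a) / M)
    (hxi : xi = a + i * h / 2) :
    |∫ x in a..b, (f x - quadInterpOne a h M f x) * |xi - x| ^ (-γ)| ≤
      K * h ^ 4 * (5 * (∫ x in a..b, |xi - x| ^ (-γ)) + (min (xi - a) (b - xi)) ^ (-γ)) := by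
  obtain ⟨f₁, f₂, f₃, h₁, h₂, h₃, hB, hL⟩ := hf
  have hM' : (0 : ℝ) < M := by exact_mod_cast hM
  have hpos : 0 < h := hh ▸ div_pos (sub_pos.2 hab) hM'
  have hb : b = a + M * h := by rw [hh]; field_simp; ring
  set E : ℝ → ℝ := fun x => f x - quadInterpOne a h M f x with hE
  have hcont : ContinuousOn E (Set.Icc a b) :=
    ContinuousOn.sub (fun x hx => (h₁ x hx).continuousWithinAt)
      (continuous_quadInterpOne a hpos M f).continuousOn
  have hcell (k : ℕ) (hk : k < M) : a ≤ a + k * h ∧ a + k * h + h ≤ b := by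
    have : (k : ℝ) + 1 ≤ M := by exact_mod_cast hk
    exact ⟨by nlinarith [(Nat.cast_nonneg k : (0 : ℝ) ≤ k)], by nlinarith⟩
  have hxiab : xi ∈ Set.Icc a b := by
    have : (i : ℝ) ≤ 2 * M := by exact_mod_cast (by omega : i ≤ 2 * M)
    rw [hxi, hb]
    exact ⟨by nlinarith [(Nat.cast_nonneg i : (0 : ℝ) ≤ i)], by nlinarith⟩
  have hsplit (F : ℝ → ℝ) (hF : ∀ p q, a ≤ p → p ≤ q → q ≤ b →
      IntervalIntegrable (fun x => F x * |xi - x| ^ (-γ)) volume p q) :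
      ∫ x in a..b, F x * |xi - x| ^ (-γ) = ∑ k ∈ Finset.range M,
        ∫ t in (0 : ℝ)..h, F (a + k * h + t) * |(2 * k - i) * h / 2 + t| ^ (-γ) := by
    have := intervalIntegral.sum_integral_adjacent_intervals (μ := volume) (n := M)
      (a := fun k : ℕ => a + k * h) (f := fun x => F x * |xi - x| ^ (-γ)) (fun k hk => by
        have := hcell k hk
        refine hF _ _ this.1 (by push_cast; linarith) (by push_cast; linarith))
    simp only [Nat.cast_zero, zero_mul, add_zero, ← hb] at this
    rw [← this]
    refine Finset.sum_congr rfl fun k _ => ?_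
    have e := intervalIntegral.integral_comp_add_left (a := 0) (b := h)
      (fun x => F x * |xi - x| ^ (-γ)) (a + k * h)
    have e2 : a + ((k + 1 : ℕ) : ℝ) * h = a + k * h + h := by push_cast; ring
    rw [add_zero] at e
    rw [e2, ← e]
    congr 1; funext t
    have : |xi - (a + k * h + t)| = |(2 * k - i) * h / 2 + t| := by
      rw [hxi, ← abs_neg]; congr 1; ring
    rw [this]
  have hk := intervalIntegrable_abs_const_sub_rpow hγ xi
  have hEk (p q : ℝ) (hap : a ≤ p) (hpq : p ≤ q) (hqb : q ≤ b) :
      IntervalIntegrable (fun x => E x * |xi - x| ^ (-γ)) volume p q := by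
    refine (hk p q).continuousOn_mul (hcont.mono ?_)
    rw [Set.uIcc_of_le hpq]
    exact Set.Icc_subset_Icc hap hqb
  set P : ℕ → ℝ := fun k => ∫ t in (0 : ℝ)..h, |((2 * k - i) * h / 2 : ℝ) + t| ^ (-γ) with hP
  have hPsum : ∫ x in a..b, |xi - x| ^ (-γ) = ∑ k ∈ Finset.range M, P k := by
    simpa [hP] using hsplit (fun _ => 1) (fun p q _ _ _ => by simpa using hk p q)
  set J : ℕ → ℝ := fun k => cellMoment γ h ((2 * k - i) * h / 2) with hJ
  set G : ℕ → ℝ := fun k => f₃ (a + k * h + h / 2) / 6 with hG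
  set I : ℕ → ℝ := fun k =>
    ∫ t in (0 : ℝ)..h, E (a + k * h + t) * |((2 * k - i) * h / 2 : ℝ) + t| ^ (-γ) with hI
  have hIG (k : ℕ) (hkM : k < M) : |I k - G k * J k| ≤ 4 * K * h ^ 4 * P k := by
    have hker := intervalIntegrable_abs_const_add_rpow hγ ((2 * k - i) * h / 2) 0 h
    have hEc : ContinuousOn (fun t => E (a + k * h + t)) (Set.uIcc 0 h) := by
      refine hcont.comp (by fun_prop) fun t ht => ?_
      rw [Set.uIcc_of_le hpos.le] at ht
      have := hcell k hkM
      exact ⟨by linarith [ht.1], by linarith [ht.2]⟩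
    simp only [hI, hJ, hP, cellMoment]
    rw [← intervalIntegral.integral_const_mul,
      ← intervalIntegral.integral_const_mul, ← intervalIntegral.integral_sub
        (hker.continuousOn_mul hEc) ((hker.continuousOn_mul (by fun_prop)).const_mul _),
      ← Real.norm_eq_abs]
    refine intervalIntegral.norm_integral_le_of_norm_le hpos.le (Filter.Eventually.of_forall ?_)
      (hker.const_mul _)
    intro t ht
    have h0 : 0 ≤ |((2 * k - i) * h / 2 : ℝ) + t| ^ (-γ) := Real.rpow_nonneg (abs_nonneg _) _
    have := abs_interp_error_sub_le hK h₁ h₂ h₃ hL hpos hb hkM ⟨ht.1.le, ht.2⟩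
    rw [← mul_assoc, ← sub_mul, norm_mul, Real.norm_eq_abs, Real.norm_eq_abs, abs_of_nonneg h0]
    exact mul_le_mul_of_nonneg_right this h0
  have hGJ (k : ℕ) (hkM : k < M) : |(G k - f₃ xi / 6) * J k| ≤ K * h ^ 4 * P k := by
    have hm : a + k * h + h / 2 ∈ Set.Icc a b := by
      have := hcell k hkM
      exact ⟨by linarith, by linarith⟩
    have e1 : G k - f₃ xi / 6 = (f₃ (a + k * h + h / 2) - f₃ xi) / 6 := by rw [hG]; ring
    have e2 : a + k * h + h / 2 - xi = (2 * k - i) * h / 2 + h / 2 := by rw [hxi]; ring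
    have l1 := hL _ hm _ hxiab
    rw [e2] at l1
    have l2 := abs_mul_abs_cellMoment_le (k := 2 * k - i) hγ0 hγ hpos
      (s := (2 * k - i) * h / 2) (by push_cast; ring)
    have hP0 : 0 ≤ P k := intervalIntegral.integral_nonneg hpos.le fun t _ =>
      Real.rpow_nonneg (abs_nonneg _) _
    rw [abs_mul, e1, abs_div, abs_of_pos (by norm_num : (0 : ℝ) < 6)]
    calc |f₃ (a + k * h + h / 2) - f₃ xi| / 6 * |J k|
        ≤ K * |(2 * k - i) * h / 2 + h / 2| / 6 * |J k| := by gcongr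
      _ = K / 6 * (|(2 * k - i) * h / 2 + h / 2| * |J k|) := by ring
      _ ≤ K / 6 * (3 * h ^ 4 * P k) := by gcongr
      _ ≤ K * h ^ 4 * P k := by nlinarith [mul_nonneg (mul_nonneg hK (pow_nonneg hpos.le 4)) hP0]
  have hJsum : |f₃ xi / 6 * ∑ k ∈ Finset.range M, J k| ≤
      K * h ^ 4 * (min (xi - a) (b - xi)) ^ (-γ) := by
    have := abs_sum_cellMoment_le hγ0 hγ hpos hi hiM
    have e1 : xi - a = i * h / 2 := by rw [hxi]; ring
    have e2 : b - xi = (2 * M - i) * h / 2 := by rw [hxi, hb]; ring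
    rw [e1, e2, abs_mul, mul_assoc]
    refine mul_le_mul ?_ this (abs_nonneg _) hK
    rw [abs_div, abs_of_pos (by norm_num : (0 : ℝ) < 6)]
    linarith [hB _ hxiab]
  rw [hsplit E hEk]
  have hdec : ∑ k ∈ Finset.range M, I k = ∑ k ∈ Finset.range M, (I k - G k * J k) +
      ∑ k ∈ Finset.range M, (G k - f₃ xi / 6) * J k + f₃ xi / 6 * ∑ k ∈ Finset.range M, J k := by
    rw [Finset.mul_sum, ← Finset.sum_add_distrib, ← Finset.sum_add_distrib]
    exact Finset.sum_congr rfl fun k _ => by ring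
  change |∑ k ∈ Finset.range M, I k| ≤ _
  rw [hdec]
  have s1 : |∑ k ∈ Finset.range M, (I k - G k * J k)| ≤
      4 * K * h ^ 4 * ∑ k ∈ Finset.range M, P k := by
    rw [Finset.mul_sum]
    exact (Finset.abs_sum_le_sum_abs _ _).trans
      (Finset.sum_le_sum fun k hk => hIG k (Finset.mem_range.1 hk))
  have s2 : |∑ k ∈ Finset.range M, (G k - f₃ xi / 6) * J k| ≤
      K * h ^ 4 * ∑ k ∈ Finset.range M, P k := by
    rw [Finset.mul_sum]
    exact (Finset.abs_sum_le_sum_abs _ _).trans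
      (Finset.sum_le_sum fun k hk => hGJ k (Finset.mem_range.1 hk))
  rw [hPsum]
  refine (abs_add_three _ _ _).trans ?_
  linarith

/-- Constant in the univariate weighted interpolation error estimate. -/
noncomputable def interpConst (γ a b : ℝ) : ℝ :=
  5 * (∫ t in (a - b)..(b - a), |t| ^ (-γ)) * (b - a) ^ γ + 1

theorem HasLipschitzThirdDeriv.abs_integral_interp_error_le_const {γ a b K : ℝ} (hγ0 : 0 < γ)
    (hγ : γ < 1) (hab : a < b) (hK : 0 ≤ K) {f : ℝ → ℝ} (hf : HasLipschitzThirdDeriv f a b K)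
    {M i : ℕ} (hM : 1 ≤ M) (hi : 1 ≤ i) (hiM : i ≤ 2 * M - 1) {h xi : ℝ} (hh : h = (b - a) / M)
    (hxi : xi = a + i * h / 2) :
    |∫ x in a..b, (f x - quadInterpOne a h M f x) * |xi - x| ^ (-γ)| ≤
      K * interpConst γ a b * (h ^ 4 * (min (xi - a) (b - xi)) ^ (-γ)) := by
  have hM' : (0 : ℝ) < M := by exact_mod_cast hM
  have hpos : 0 < h := hh ▸ div_pos (sub_pos.2 hab) hM'
  have hb : b = a + M * h := by rw [hh]; field_simp; ring
  have hi1 : (1 : ℝ) ≤ i := by exact_mod_cast hi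
  have hi2 : (i : ℝ) + 1 ≤ 2 * M := by exact_mod_cast (by omega : i + 1 ≤ 2 * M)
  have hxa : a < xi := by nlinarith
  have hxb : xi < b := by nlinarith
  refine (hf.abs_integral_interp_error_le hγ0 hγ hab hK hM hi hiM hh hxi).trans ?_
  have hker := integral_abs_const_sub_rpow_le hγ (⟨hxa.le, hxb.le⟩ : xi ∈ Set.Icc a b)
  have hB : 0 ≤ ∫ t in (a - b)..(b - a), |t| ^ (-γ) :=
    intervalIntegral.integral_nonneg (by linarith) fun t _ => Real.rpow_nonneg (abs_nonneg _) _
  set B := ∫ t in (a - b)..(b - a), |t| ^ (-γ) with hBdef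
  have he0 : 0 < min (xi - a) (b - xi) := lt_min (by linarith) (by linarith)
  have he1 : min (xi - a) (b - xi) ≤ b - a := (min_le_left _ _).trans (by linarith)
  set e := min (xi - a) (b - xi)
  have hge : 1 ≤ (b - a) ^ γ * e ^ (-γ) := by
    rw [Real.rpow_neg he0.le, ← div_eq_mul_inv, one_le_div (Real.rpow_pos_of_pos he0 _)]
    exact Real.rpow_le_rpow he0.le he1 hγ0.le
  have : 5 * (∫ x in a..b, |xi - x| ^ (-γ)) + e ^ (-γ) ≤ interpConst γ a b * e ^ (-γ) := by
    rw [interpConst, ← hBdef]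
    nlinarith [mul_le_mul_of_nonneg_left hge hB]
  calc K * h ^ 4 * (5 * (∫ x in a..b, |xi - x| ^ (-γ)) + e ^ (-γ))
      ≤ K * h ^ 4 * (interpConst γ a b * e ^ (-γ)) := by gcongr
    _ = _ := by ring

theorem interpConst_pos {γ a b : ℝ} (hab : a < b) : 0 < interpConst γ a b := by
  have hB : 0 ≤ ∫ t in (a - b)..(b - a), |t| ^ (-γ) :=
    intervalIntegral.integral_nonneg (by linarith) fun t _ => Real.rpow_nonneg (abs_nonneg _) _
  have := Real.rpow_nonneg (sub_pos.2 hab).le γ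
  unfold interpConst
  positivity

theorem sum_abs_integral_quadBasis_le {γ a b xi : ℝ} {M : ℕ} (hγ : γ < 1) (hM : 1 ≤ M)
    (hab : a < b) (hxi : xi ∈ Set.Icc a b) :
    ∑ l ∈ Finset.range (2 * M + 1),
      |∫ x in a..b, quadBasis a ((b - a) / M) l x * |xi - x| ^ (-γ)| ≤
      3 * ∫ t in (a - b)..(b - a), |t| ^ (-γ) := by
  have hpos : 0 < (b - a) / M := div_pos (sub_pos.2 hab) (by exact_mod_cast hM)
  have hk := intervalIntegrable_abs_const_sub_rpow hγ xi a b
  have hint (l : ℕ) : IntervalIntegrable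
      (fun x => |quadBasis a ((b - a) / M) l x| * |xi - x| ^ (-γ)) volume a b :=
    hk.continuousOn_mul (continuous_quadBasis a hpos l).abs.continuousOn
  calc ∑ l ∈ Finset.range (2 * M + 1),
        |∫ x in a..b, quadBasis a ((b - a) / M) l x * |xi - x| ^ (-γ)|
      ≤ ∑ l ∈ Finset.range (2 * M + 1),
        ∫ x in a..b, |quadBasis a ((b - a) / M) l x| * |xi - x| ^ (-γ) := by
        refine Finset.sum_le_sum fun l _ => ?_
        rw [← Real.norm_eq_abs]
        refine intervalIntegral.norm_integral_le_of_norm_le hab.le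
          (Filter.Eventually.of_forall fun x _ => ?_) (hint l)
        rw [Real.norm_eq_abs, abs_mul, abs_of_nonneg (Real.rpow_nonneg (abs_nonneg _) _)]
    _ = ∫ x in a..b, ∑ l ∈ Finset.range (2 * M + 1),
          |quadBasis a ((b - a) / M) l x| * |xi - x| ^ (-γ) :=
        (intervalIntegral.integral_finsetSum fun l _ => hint l).symm
    _ ≤ ∫ x in a..b, 3 * |xi - x| ^ (-γ) := by
        refine intervalIntegral.integral_mono_on hab.le ?_ (hk.const_mul 3) fun x hx => ?_
        · simpa [Finset.sum_fn] using
            IntervalIntegrable.sum (Finset.range (2 * M + 1)) fun l _ => hint l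
        rw [← Finset.sum_mul]
        exact mul_le_mul_of_nonneg_right (sum_abs_quadBasis_le hM hab hx)
          (Real.rpow_nonneg (abs_nonneg _) _)
    _ ≤ _ := by
        rw [intervalIntegral.integral_const_mul]
        exact mul_le_mul_of_nonneg_left (integral_abs_const_sub_rpow_le hγ hxi) (by norm_num)

theorem abs_integral_le_of_abs_sub_le {F S g : ℝ → ℝ} {c d : ℝ} (hcd : c ≤ d)
    (hS : IntervalIntegrable S volume c d) (hg : IntervalIntegrable g volume c d)
    (hg0 : ∀ y ∈ Set.Icc c d, 0 ≤ g y) (h : ∀ y ∈ Set.Icc c d, |F y - S y| ≤ g y) :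
    |∫ y in c..d, F y| ≤ (∫ y in c..d, g y) + |∫ y in c..d, S y| := by
  by_cases hF : IntervalIntegrable F volume c d
  · have e : ∫ y in c..d, F y = (∫ y in c..d, (F y - S y)) + ∫ y in c..d, S y := by
      rw [intervalIntegral.integral_sub hF hS]; ring
    have h1 : |∫ y in c..d, (F y - S y)| ≤ ∫ y in c..d, g y := by
      rw [← Real.norm_eq_abs]
      exact intervalIntegral.norm_integral_le_of_norm_le hcd
        (Filter.Eventually.of_forall fun y hy => h y ⟨hy.1.le, hy.2⟩) hg
    rw [e]
    exact (abs_add_le _ _).trans (by linarith)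
  · rw [intervalIntegral.integral_undef hF, abs_zero]
    exact add_nonneg (intervalIntegral.integral_nonneg hcd hg0) (abs_nonneg _)

theorem integral_sub_quadInterp_mul {γ a b c hx hy xi yj y : ℝ} (hγ : γ < 1) (hab : a ≤ b)
    (hx0 : 0 < hx) {Mx My : ℕ} {u : ℝ → ℝ → ℝ}
    (hu : ContinuousOn (fun x => u x y) (Set.Icc a b)) :
    ∫ x in a..b, (u x y - quadInterp a c hx hy Mx My u x y) *
        (|xi - x| ^ (-γ) * |yj - y| ^ (-γ)) =
      (∫ x in a..b, (u x y - quadInterpOne a hx Mx (fun x => u x y) x) * |xi - x| ^ (-γ)) *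
          |yj - y| ^ (-γ) +
        ∑ l ∈ Finset.range (2 * Mx + 1), (∫ x in a..b, quadBasis a hx l x * |xi - x| ^ (-γ)) *
          ((u (a + (l : ℝ) * hx / 2) y - quadInterpOne c hy My (u (a + (l : ℝ) * hx / 2)) y) *
            |yj - y| ^ (-γ)) := by
  have hk := intervalIntegrable_abs_const_sub_rpow hγ xi a b
  have hφ (l : ℕ) : IntervalIntegrable (fun x => quadBasis a hx l x * |xi - x| ^ (-γ))
      volume a b := hk.continuousOn_mul (continuous_quadBasis a hx0 l).continuousOn
  have hE : IntervalIntegrable (fun x => (u x y - quadInterpOne a hx Mx (fun x => u x y) x) *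
      |xi - x| ^ (-γ)) volume a b := by
    refine hk.continuousOn_mul ?_
    rw [Set.uIcc_of_le hab]
    exact hu.sub (continuous_quadInterpOne a hx0 Mx _).continuousOn
  simp only [← intervalIntegral.integral_mul_const]
  rw [← intervalIntegral.integral_finsetSum fun l _ => (hφ l).mul_const _,
    ← intervalIntegral.integral_add (hE.mul_const _)]
  · congr 1
    funext x
    have e : u x y - quadInterp a c hx hy Mx My u x y =
        (u x y - quadInterpOne a hx Mx (fun x => u x y) x) +
        ∑ l ∈ Finset.range (2 * Mx + 1), quadBasis a hx l x *
          (u (a + (l : ℝ) * hx / 2) y - quadInterpOne c hy My (u (a + (l : ℝ) * hx / 2)) y) := by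
      simp only [mul_sub, Finset.sum_sub_distrib]
      rw [quadInterp_eq, quadInterpOne]
      ring
    rw [e, add_mul, Finset.sum_mul]
    congr 1
    · ring
    · exact Finset.sum_congr rfl fun l _ => by ring
  · simpa [Finset.sum_fn] using
      IntervalIntegrable.sum (Finset.range (2 * Mx + 1)) fun l _ => (hφ l).mul_const
        ((u (a + (l : ℝ) * hx / 2) y - quadInterpOne c hy My (u (a + (l : ℝ) * hx / 2)) y) *
            |yj - y| ^ (-γ))

theorem node_mem_Icc {a b : ℝ} (hab : a < b) {M l : ℕ} (hM : 1 ≤ M) (hl : l ≤ 2 * M) :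
    a + (l : ℝ) * ((b - a) / M) / 2 ∈ Set.Icc a b := by
  have hM' : (0 : ℝ) < M := by exact_mod_cast hM
  have hpos : 0 < (b - a) / M := div_pos (sub_pos.2 hab) hM'
  have hb : b = a + M * ((b - a) / M) := by field_simp; ring
  have hl' : (l : ℝ) ≤ 2 * M := by exact_mod_cast hl
  refine ⟨by linarith [(by positivity : 0 ≤ (l : ℝ) * ((b - a) / M) / 2)], ?_⟩
  have := mul_le_mul_of_nonneg_right hl' hpos.le
  linarith

/-- Quasi-optimal error estimate for piecewise quadratic interpolation against the
multiplicative Cauchy kernel: for `u ∈ C⁶([a,b]×[c,d])` there is `C > 0` such that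
for all mesh sizes and interior collocation indices,
`|∫∫ (u − u_Q)(x,y) |x_{i/2} − x|^{−γ} |y_{j/2} − y|^{−γ} dx dy|
  ≤ C (h_x⁴ η_{i/2}^{−γ} + h_y⁴ η̃_{j/2}^{−γ} + h_x^{5−γ} + h_y^{5−γ})`. -/
theorem stmt9 (γ a b c d : ℝ) (hγ0 : 0 < γ) (hγ1 : γ < 1) (hab : a < b) (hcd : c < d)
    (u : ℝ → ℝ → ℝ)
    (hu : ContDiffOn ℝ 6 (Function.uncurry u) (Set.Icc a b ×ˢ Set.Icc c d)) :
    ∃ C > 0, ∀ Mx My : ℕ, 1 ≤ Mx → 1 ≤ My →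
      ∀ i j : ℕ, 1 ≤ i → i ≤ 2 * Mx - 1 → 1 ≤ j → j ≤ 2 * My - 1 →
      ∀ hx hy xi yj ei ej : ℝ,
        hx = (b - a) / Mx → hy = (d - c) / My →
        xi = a + (i : ℝ) * hx / 2 → yj = c + (j : ℝ) * hy / 2 →
        ei = min (xi - a) (b - xi) → ej = min (yj - c) (d - yj) →
        |∫ y' in c..d, ∫ x' in a..b,
            (u x' y' - quadInterp a c hx hy Mx My u x' y') *
              (|xi - x'| ^ (-γ) * |yj - y'| ^ (-γ))| ≤
          C * (hx ^ 4 * ei ^ (-γ) + hy ^ 4 * ej ^ (-γ)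
              + hx ^ ((5 : ℝ) - γ) + hy ^ ((5 : ℝ) - γ)) := by
  obtain ⟨K, hK, hKx⟩ := exists_hasLipschitzThirdDeriv_slice hab hcd hu
  obtain ⟨L, hL, hLy⟩ := exists_hasLipschitzThirdDeriv_slice hcd hab
    (F := fun p => Function.uncurry u p.swap)
    (hu.comp (contDiff_snd.prodMk contDiff_fst).contDiffOn fun p hp => ⟨hp.2, hp.1⟩)
  have hcont : ContinuousOn (Function.uncurry u) (Set.Icc a b ×ˢ Set.Icc c d) := hu.continuousOn
  simp only [Function.uncurry, Prod.swap] at hKx hLy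
  have hB {p q : ℝ} (hpq : p < q) : 0 ≤ ∫ t in (p - q)..(q - p), |t| ^ (-γ) :=
    intervalIntegral.integral_nonneg (by linarith) fun t _ => Real.rpow_nonneg (abs_nonneg _) _
  have hBx := hB hab
  have hBy := hB hcd
  have hker (s : ℝ) (hs : s ∈ Set.Icc c d) := integral_abs_const_sub_rpow_le hγ1 hs
  set Bx := ∫ t in (a - b)..(b - a), |t| ^ (-γ)
  set By := ∫ t in (c - d)..(d - c), |t| ^ (-γ)
  have hIx := interpConst_pos (γ := γ) hab
  have hIy := interpConst_pos (γ := γ) hcd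
  set Cx := K * interpConst γ a b * By with hCx
  set Cy := L * interpConst γ c d * (3 * Bx) with hCy
  have hCx0 : 0 ≤ Cx := by positivity
  have hCy0 : 0 ≤ Cy := by positivity
  refine ⟨Cx + Cy + 1, by positivity, ?_⟩
  intro Mx My hMx hMy i j hi hiM hj hjM hx hy xi yj ei ej ehx ehy exi eyj eei eej
  have hx0 : 0 < hx := ehx ▸ div_pos (sub_pos.2 hab) (by exact_mod_cast hMx)
  have hy0 : 0 < hy := ehy ▸ div_pos (sub_pos.2 hcd) (by exact_mod_cast hMy)
  have hxi : xi ∈ Set.Icc a b := by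
    rw [exi, ehx]; exact node_mem_Icc hab hMx (by omega)
  have hyj : yj ∈ Set.Icc c d := by
    rw [eyj, ehy]; exact node_mem_Icc hcd hMy (by omega)
  have hei : 0 ≤ ei := by
    rw [eei]; exact le_min (by linarith [hxi.1]) (by linarith [hxi.2])
  have hej : 0 ≤ ej := by
    rw [eej]; exact le_min (by linarith [hyj.1]) (by linarith [hyj.2])
  have hk := intervalIntegrable_abs_const_sub_rpow hγ1 yj c d
  set X := hx ^ 4 * ei ^ (-γ) with hX
  set Y := hy ^ 4 * ej ^ (-γ) with hY
  have hX0 : 0 ≤ X := by positivity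
  have hY0 : 0 ≤ Y := by positivity
  set w : ℕ → ℝ := fun l => ∫ x in a..b, quadBasis a hx l x * |xi - x| ^ (-γ) with hw
  set D : ℕ → ℝ → ℝ := fun l y => (u (a + (l : ℝ) * hx / 2) y
    - quadInterpOne c hy My (u (a + (l : ℝ) * hx / 2)) y) * |yj - y| ^ (-γ) with hD
  have hnode (l : ℕ) (hl : l ∈ Finset.range (2 * Mx + 1)) :
      a + (l : ℝ) * hx / 2 ∈ Set.Icc a b := by
    rw [ehx]
    exact node_mem_Icc hab hMx (by have := Finset.mem_range.1 hl; omega)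
  have hDint (l : ℕ) (hl : l ∈ Finset.range (2 * Mx + 1)) :
      IntervalIntegrable (D l) volume c d := by
    refine hk.continuousOn_mul ?_
    rw [Set.uIcc_of_le hcd.le]
    refine ContinuousOn.sub ?_ (continuous_quadInterpOne c hy0 My _).continuousOn
    exact hcont.comp (f := fun y => (a + (l : ℝ) * hx / 2, y)) (by fun_prop)
      fun y hy => ⟨hnode l hl, hy⟩
  have hDbound (l : ℕ) (hl : l ∈ Finset.range (2 * Mx + 1)) :
      |∫ y in c..d, D l y| ≤ L * interpConst γ c d * Y := by
    rw [hY, eej]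
    exact (hLy _ (hnode l hl)).abs_integral_interp_error_le_const hγ0 hγ1 hcd hL hMy hj hjM
      ehy eyj
  have hwsum : ∑ l ∈ Finset.range (2 * Mx + 1), |w l| ≤ 3 * Bx := by
    rw [hw, ehx]; exact sum_abs_integral_quadBasis_le hγ1 hMx hab hxi
  set S : ℝ → ℝ := fun y => ∑ l ∈ Finset.range (2 * Mx + 1), w l * D l y with hS
  have hSint : IntervalIntegrable S volume c d := by
    simpa [hS, Finset.sum_fn] using
      IntervalIntegrable.sum (Finset.range (2 * Mx + 1)) fun l hl => (hDint l hl).const_mul (w l)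
  have hSbound : |∫ y in c..d, S y| ≤ Cy * Y := by
    rw [hS, intervalIntegral.integral_finsetSum fun l hl => (hDint l hl).const_mul (w l)]
    calc |∑ l ∈ Finset.range (2 * Mx + 1), ∫ y in c..d, w l * D l y|
        ≤ ∑ l ∈ Finset.range (2 * Mx + 1), |w l| * (L * interpConst γ c d * Y) := by
          refine (Finset.abs_sum_le_sum_abs _ _).trans (Finset.sum_le_sum fun l hl => ?_)
          rw [intervalIntegral.integral_const_mul, abs_mul]
          exact mul_le_mul_of_nonneg_left (hDbound l hl) (abs_nonneg _)
      _ = (∑ l ∈ Finset.range (2 * Mx + 1), |w l|) * (L * interpConst γ c d * Y) :=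
          (Finset.sum_mul _ _ _).symm
      _ ≤ 3 * Bx * (L * interpConst γ c d * Y) := by gcongr
      _ = Cy * Y := by rw [hCy]; ring
  have hmain := abs_integral_le_of_abs_sub_le
    (F := fun y' => ∫ x' in a..b, (u x' y' - quadInterp a c hx hy Mx My u x' y') *
      (|xi - x'| ^ (-γ) * |yj - y'| ^ (-γ)))
    (g := fun y => K * interpConst γ a b * X * |yj - y| ^ (-γ)) hcd.le hSint
    (hk.const_mul _) (fun y _ => by positivity) (fun y hyI => by
      have hc : ContinuousOn (fun x => u x y) (Set.Icc a b) :=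
        hcont.comp (f := fun x => (x, y)) (by fun_prop) fun x hxI => ⟨hxI, hyI⟩
      rw [integral_sub_quadInterp_mul hγ1 hab.le hx0 hc]
      simp only [hS, hw, hD]
      rw [add_sub_cancel_right, abs_mul, abs_of_nonneg (Real.rpow_nonneg (abs_nonneg (yj - y)) _)]
      refine mul_le_mul_of_nonneg_right ?_ (Real.rpow_nonneg (abs_nonneg _) _)
      rw [hX, eei]
      exact (hKx y hyI).abs_integral_interp_error_le_const hγ0 hγ1 hab hK hMx hi hiM ehx exi)
  refine hmain.trans ?_
  rw [intervalIntegral.integral_const_mul]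
  have hgx : K * interpConst γ a b * X * (∫ y in c..d, |yj - y| ^ (-γ)) ≤ Cx * X := by
    calc _ ≤ K * interpConst γ a b * X * By := by gcongr; exact hker yj hyj
      _ = Cx * X := by rw [hCx]; ring
  have hx5 : 0 ≤ hx ^ ((5 : ℝ) - γ) := Real.rpow_nonneg hx0.le _
  have hy5 : 0 ≤ hy ^ ((5 : ℝ) - γ) := Real.rpow_nonneg hy0.le _
  have hC0 : 0 ≤ Cx + Cy + 1 := by positivity
  nlinarith [mul_nonneg hCx0 hY0, mul_nonneg hCy0 hX0, mul_nonneg hC0 hx5, mul_nonneg hC0 hy5]
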